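/- Let Σ be a connected topological manifold (possibly with boundary) that is simply connected, and let E, Σ' ⊂ Σ be connected open/closed subsets with Σ = Σ' ∪ E and common frontier Γ = ∂Σ' ∩ int(Σ) = ∂E ∩ int(Σ). If Γ had more than one connected component, there would exist a loop in int(Σ) intersecting one component of Γ transversally in exactly one point, contradicting simple connectedness. Hence Γ is connected. -/

import Mathlib

/-!
The argument is the vanishing of `H¹(M; ℤ/2)`, in Čech form.

Suppose `frontier A` is the union of two disjoint nonempty closed sets `F₁` and `F₂`, and put
`O₁ = F₂ᶜ`, `O₂ = F₁ᶜ`. These open sets cover `M`, and `O₁ ∩ O₂` is the complement of the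
frontier, i.e. the disjoint union of the interiors of `A` and `Aᶜ`. The indicator function `c` of
`A` is therefore a locally constant `ℤ/2`-valued cocycle on `O₁ ∩ O₂`. Using it as transition
function yields a double cover of `M`, and since `M` is simply connected and locally path
connected, this cover has a section. In the two trivializations the section reads as locally
constant functions `f₁` on `O₁` and `f₂` on `O₂` with `f₂ = c + f₁` on `O₁ ∩ O₂`
(`exists_coboundary_of_simplyConnected`).

Hence `f₁` and `f₂ + 1` agree on `interior A` and glue to a locally constant function `g` on
`closure A`, while `f₁` and `f₂` agree on `interior Aᶜ` and glue to a locally constant function `h`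
on `closure Aᶜ`. Both closures are connected, so `g` and `h` are constant; but `g = h` on `F₁`
and `g = h + 1` on `F₂`, a contradiction.

Compared with an intersection-number argument, no transversality, separation axiom or regularity
of the frontier is needed. In the code `ℤ/2` is `Bool` with `xor` as addition.
-/

/-- The double cover of `X` glued from the trivial double covers of `O₁` (index `true`) and `O₂`
(index `false`) along the transition function `c`, as a bundle core with fibre `Bool`. -/
noncomputable def doubleCoverCore {X : Type*} [TopologicalSpace X] (O₁ O₂ : Set X)
    (h₁ : IsOpen O₁) (h₂ : IsOpen O₂) (hO : ∀ x, x ∈ O₁ ∨ x ∈ O₂)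
    (c : X → Bool) (hc : ContinuousOn c (O₁ ∩ O₂)) : FiberBundleCore Bool X Bool where
  baseSet i := if i = true then O₁ else O₂
  isOpen_baseSet i := by cases i <;> simpa
  indexAt x := by classical exact decide (x ∈ O₁)
  mem_baseSet_at x := by
    by_cases h : x ∈ O₁
    · simp [h]
    · simpa [h] using (hO x).resolve_left h
  coordChange i j x v := if i = j then v else xor (c x) v
  coordChange_self i x _ v := by simp
  continuousOn_coordChange i j := by
    have hxor : Continuous fun q : Bool × Bool => xor q.1 q.2 := continuous_of_discreteTopology
    have key : ContinuousOn (fun p : X × Bool => xor (c p.1) p.2)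
        ((O₁ ∩ O₂) ×ˢ Set.univ) :=
      hxor.comp_continuousOn
        ((hc.comp continuous_fst.continuousOn fun p hp => hp.1).prodMk continuous_snd.continuousOn)
    cases i <;> cases j
    · simpa using continuous_snd.continuousOn
    · simpa [Set.inter_comm] using key
    · simpa using key
    · simpa using continuous_snd.continuousOn
  coordChange_comp i j k x _ v := by
    cases i <;> cases j <;> cases k <;> cases c x <;> cases v <;> rfl

/-- Čech `H¹` with `ℤ/2` coefficients vanishes on a simply connected, locally path connected space,
for covers by two open sets: every cocycle on the overlap is a coboundary. -/
lemma exists_coboundary_of_simplyConnected {X : Type*} [TopologicalSpace X]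
    [SimplyConnectedSpace X] [LocallyPathConnectedSpace X] {O₁ O₂ : Set X}
    (h₁ : IsOpen O₁) (h₂ : IsOpen O₂) (hO : ∀ x, x ∈ O₁ ∨ x ∈ O₂)
    {c : X → Bool} (hc : ContinuousOn c (O₁ ∩ O₂)) :
    ∃ f₁ f₂ : X → Bool, ContinuousOn f₁ O₁ ∧ ContinuousOn f₂ O₂ ∧
      ∀ x ∈ O₁ ∩ O₂, f₂ x = xor (c x) (f₁ x) := by
  let Z := doubleCoverCore O₁ O₂ h₁ h₂ hO c hc
  have cov : IsCoveringMap Z.proj := FiberBundle.isCoveringMap (F := Bool) (E := Z.Fiber)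
  obtain ⟨x₀⟩ : Nonempty X := inferInstance
  -- A section of the double cover is a lift of the identity map.
  obtain ⟨s, ⟨-, hs⟩, -⟩ := cov.existsUnique_continuousMap_lifts (ContinuousMap.id X) x₀
    (⟨x₀, true⟩ : Z.TotalSpace) rfl
  have hs' : ∀ x, (s x).proj = x := fun x => congrFun hs x
  have cont : ∀ i, ContinuousOn (fun x => (Z.localTriv i (s x)).2) (Z.baseSet i) := fun i =>
    continuous_snd.comp_continuousOn
      ((Z.localTriv i).continuousOn.comp s.continuous.continuousOn fun x hx => by
        rw [(Z.localTriv i).mem_source]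
        change (s x).proj ∈ Z.baseSet i
        rwa [hs'])
  refine ⟨_, _, cont true, cont false, fun x hx => ?_⟩
  have hat := Z.mem_baseSet_at x
  have hcomp := Z.coordChange_comp (Z.indexAt x) true false x ⟨⟨hat, hx.1⟩, hx.2⟩ (s x).2
  simp only [FiberBundleCore.localTriv_apply, hs']
  exact hcomp.symm

/-- If `f₁` on `O₁` and `f₂` on `O₂` are continuous and agree on `s ∩ O₁ \ F`, where `F` misses
`O₂`, they glue to a continuous function on `s` which is `f₁` on `F` and `f₂` off `F`. -/
lemma continuousOn_glue {X : Type*} [TopologicalSpace X] {O₁ O₂ s F : Set X}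
    (h₁ : IsOpen O₁) (h₂ : IsOpen O₂) (hO : ∀ x, x ∈ O₁ ∨ x ∈ O₂)
    (hF : Disjoint F O₂) {f₁ f₂ : X → Bool} (hf₁ : ContinuousOn f₁ O₁) (hf₂ : ContinuousOn f₂ O₂)
    (hs : ∀ x ∈ s, x ∈ O₁ → x ∉ F → f₁ x = f₂ x) [DecidablePred (· ∈ F)] :
    ContinuousOn (fun x => if x ∈ F then f₁ x else f₂ x) s := by
  intro x hx
  rcases hO x with h | h
  · refine ((hf₁.continuousAt (h₁.mem_nhds h)).continuousWithinAt).congr_of_eventuallyEq_of_mem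
      ?_ hx
    filter_upwards [self_mem_nhdsWithin, mem_nhdsWithin_of_mem_nhds (h₁.mem_nhds h)] with y hy hy₁
    split_ifs with hyF
    · rfl
    · exact (hs y hy hy₁ hyF).symm
  · refine ((hf₂.continuousAt (h₂.mem_nhds h)).continuousWithinAt).congr_of_eventuallyEq_of_mem
      ?_ hx
    filter_upwards [mem_nhdsWithin_of_mem_nhds (h₂.mem_nhds h)] with y hy₂
    exact if_neg fun hyF => hF.notMem_of_mem_left hyF hy₂

/-- A simply connected manifold cannot be separated by a disconnected
hypersurface with both sides connected: if `M` is a simply connected manifold,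
`A ⊆ M` and its complement are both connected, then the frontier
`S = ∂A` is connected. -/
theorem stmt_15 (n : ℕ) (M : Type*) [TopologicalSpace M]
    [ChartedSpace (EuclideanSpace ℝ (Fin n)) M] [SimplyConnectedSpace M]
    (A : Set M) (hA : IsConnected A) (hB : IsConnected Aᶜ) :
    IsConnected (frontier A) := by
  classical
  have : LocallyPathConnectedSpace M :=
    ChartedSpace.locallyPathConnectedSpace (EuclideanSpace ℝ (Fin n)) M
  refine ⟨nonempty_frontier_iff.2 ⟨hA.nonempty, Set.nonempty_compl.1 hB.nonempty⟩, ?_⟩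
  rw [isPreconnected_closed_iff]
  rintro t t' ht ht' hcover ⟨x₁, hx₁⟩ ⟨x₂, hx₂⟩
  by_contra hempty
  rw [Set.not_nonempty_iff_eq_empty, Set.eq_empty_iff_forall_notMem] at hempty
  set F₁ := frontier A ∩ t
  set F₂ := frontier A ∩ t'
  have hdisj : ∀ x, x ∈ F₁ → x ∉ F₂ := fun x h h' => hempty x ⟨h.1, h.2, h'.2⟩
  have h₁ : IsOpen F₂ᶜ := (isClosed_frontier.inter ht').isOpen_compl
  have h₂ : IsOpen F₁ᶜ := (isClosed_frontier.inter ht).isOpen_compl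
  have hO : ∀ x, x ∈ F₂ᶜ ∨ x ∈ F₁ᶜ := fun x => by
    by_cases h : x ∈ F₁
    · exact Or.inl (hdisj x h)
    · exact Or.inr h
  have hnot : ∀ x, x ∈ F₂ᶜ → x ∉ F₁ → x ∉ frontier A := fun x h h' hx =>
    (hcover hx).elim (fun ht => h' ⟨hx, ht⟩) fun ht => h ⟨hx, ht⟩
  have hmemA : ∀ x ∈ closure A, x ∉ frontier A → x ∈ interior A := fun x hx hx' => by
    by_contra h
    exact hx' ⟨hx, h⟩
  have hmemB : ∀ x ∈ closure Aᶜ, x ∉ frontier A → x ∈ interior Aᶜ := fun x hx hx' => by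
    by_contra h
    exact hx' (frontier_compl A ▸ ⟨hx, h⟩)
  have hc : ContinuousOn (fun x => decide (x ∈ A)) (F₂ᶜ ∩ F₁ᶜ) := by
    intro x hx
    have hxF := hnot x hx.1 hx.2
    refine ContinuousAt.continuousWithinAt ?_
    by_cases hxA : x ∈ A
    · refine (continuousAt_const (y := true)).congr ?_
      filter_upwards [isOpen_interior.mem_nhds (hmemA x (subset_closure hxA) hxF)] with y hy
      simp [interior_subset hy]
    · refine (continuousAt_const (y := false)).congr ?_
      filter_upwards [isOpen_interior.mem_nhds (hmemB x (subset_closure hxA) hxF)] with y hy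
      have hyA : y ∉ A := interior_subset hy
      simp [hyA]
  obtain ⟨f₁, f₂, hf₁, hf₂, hf⟩ := exists_coboundary_of_simplyConnected h₁ h₂ hO hc
  have hd : Disjoint F₁ F₁ᶜ := disjoint_compl_right
  have hg := continuousOn_glue (s := closure A) (f₂ := fun x => !(f₂ x)) h₁ h₂ hO hd hf₁
    ((continuous_of_discreteTopology (f := not)).comp_continuousOn hf₂) fun x hx hx₁ hx₂ => by
      have hxA : x ∈ A := interior_subset (hmemA x hx (hnot x hx₁ hx₂))
      simp [hf x ⟨hx₁, hx₂⟩, hxA]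
  have hh := continuousOn_glue (s := closure Aᶜ) h₁ h₂ hO hd hf₁ hf₂ fun x hx hx₁ hx₂ => by
      have hxA : x ∉ A := interior_subset (hmemB x hx (hnot x hx₁ hx₂))
      simp [hf x ⟨hx₁, hx₂⟩, hxA]
  have hsubB : frontier A ⊆ closure Aᶜ := frontier_compl A ▸ frontier_subset_closure
  have eg := hA.closure.isPreconnected.constant hg
    (frontier_subset_closure hx₁.1) (frontier_subset_closure hx₂.1)
  have eh := hB.closure.isPreconnected.constant hh (hsubB hx₁.1) (hsubB hx₂.1)
  have hx₂' : x₂ ∉ F₁ := fun h => hdisj x₂ h hx₂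
  simp only [if_pos hx₁, if_neg hx₂'] at eg eh
  rw [eh] at eg
  simp at eg
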